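/- Let z₀ ∈ ℂ with |Im(z₀)| < 1/2. If ∫₀^∞ (ℰf)(u) u^{−iz₀} d*u = 0 for every even Schwartz function f : ℝ → ℂ with ∫_ℝ f(x) dx = 0, then ζ(1/2 − iz₀) = 0. -/

import Mathlib

open MeasureTheory Set

/-- `(ℰ f)(u) = u^{1/2} ∑_{n ≥ 1} f(n u)`. -/
noncomputable def Emap (f : ℝ → ℂ) (u : ℝ) : ℂ :=
  (u : ℂ) ^ ((1 : ℂ)/2) * ∑' n : ℕ, f ((n + 1) * u)

/-!
For a Schwartz function `g`, the derivative `f = (x g)'` has integral zero and Mellin transform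
`(1 - s) ĝ(s)`, where `ĝ` is that of `g`. Summing over dilations, `∑ f(n u)` has Mellin transform
`-(s - 1) ζ(s) ĝ(s)` for `Re s > 1`. Since `∫ f = 0`, the Riemann sums `u ∑ f(n u)` are `O(u)` as
`u → 0`, so the Mellin transform of `∑ f(n u)` is holomorphic on `Re s > 0` and the identity
persists there (Müntz's formula). For each `s` some even `g` has `ĝ(s) ≠ 0`, so a zero of all these
transforms is a zero of the entire function `(s - 1) ζ(s)`; it is not the point `s = 1`, where that
function has the value `1`.
-/

open Filter Topology Asymptotics
open scoped SchwartzMap ContDiff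

variable {E : Type*} [NormedAddCommGroup E]

/-- The sum `∑_{n ≥ 1} f (n u)` of the values of `f` at the positive multiples of `u`, indexed from
`n = 0` as in `Emap`; it is `Emap f u` without the factor `u ^ (1 / 2)`. -/
noncomputable def dilationSum (f : ℝ → E) (u : ℝ) : E :=
  ∑' n : ℕ, f ((n + 1) * u)

section Decay

variable {f : ℝ → E} {C a : ℝ}

lemma norm_apply_mul_le_of_norm_le_rpow (hf : ∀ x > 0, ‖f x‖ ≤ C * x ^ (-a)) {u : ℝ} (hu : 0 < u)
    (n : ℕ) : ‖f ((n + 1) * u)‖ ≤ C * ((n + 1 : ℝ) ^ (-a) * u ^ (-a)) := by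
  rw [← Real.mul_rpow (by positivity) hu.le]
  exact hf _ (by positivity)

lemma summable_nat_add_one_rpow_neg (ha : 1 < a) : Summable fun n : ℕ => (n + 1 : ℝ) ^ (-a) :=
  mod_cast (summable_nat_add_iff 1).mpr (Real.summable_nat_rpow.mpr (neg_lt_neg ha))

lemma summable_apply_mul_of_norm_le_rpow [CompleteSpace E] (ha : 1 < a)
    (hf : ∀ x > 0, ‖f x‖ ≤ C * x ^ (-a)) {u : ℝ} (hu : 0 < u) :
    Summable fun n : ℕ => f ((n + 1) * u) :=
  .of_norm_bounded (((summable_nat_add_one_rpow_neg ha).mul_right _).mul_left C)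
    (norm_apply_mul_le_of_norm_le_rpow hf hu)

lemma dilationSum_isBigO_atTop (ha : 1 < a) (hf : ∀ x > 0, ‖f x‖ ≤ C * x ^ (-a)) :
    dilationSum f =O[atTop] (· ^ (-a)) := by
  refine .of_bound (C * ∑' n : ℕ, (n + 1 : ℝ) ^ (-a)) ?_
  filter_upwards [eventually_gt_atTop 0] with u hu
  rw [Real.norm_of_nonneg (by positivity), mul_assoc]
  exact tsum_of_norm_bounded (((summable_nat_add_one_rpow_neg ha).hasSum.mul_right _).mul_left C)
    (norm_apply_mul_le_of_norm_le_rpow hf hu)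

lemma continuousOn_dilationSum [CompleteSpace E] (hcont : ContinuousOn f (Ioi 0)) (ha : 1 < a)
    (hf : ∀ x > 0, ‖f x‖ ≤ C * x ^ (-a)) : ContinuousOn (dilationSum f) (Ioi 0) := by
  have hC : 0 ≤ C := by simpa using (norm_nonneg _).trans (hf 1 one_pos)
  suffices h : ∀ c > 0, ContinuousOn (dilationSum f) (Ioi c) from
    continuousOn_of_forall_continuousAt fun u (hu : 0 < u) =>
      (h (u / 2) (half_pos hu)).continuousAt (Ioi_mem_nhds (half_lt_self hu))
  intro c hc
  refine continuousOn_tsum (fun n => hcont.comp (by fun_prop) fun u hu => ?_)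
    (((summable_nat_add_one_rpow_neg ha).mul_right (c ^ (-a))).mul_left C) fun n u hu => ?_
  · have : 0 < u := hc.trans hu
    simp only [mem_Ioi]
    positivity
  · refine (norm_apply_mul_le_of_norm_le_rpow hf (hc.trans hu) n).trans ?_
    have hle : u ^ (-a) ≤ c ^ (-a) := Real.rpow_le_rpow_of_nonpos hc hu.le (by linarith)
    gcongr

end Decay

section RiemannSum

lemma intervalIntegrable_of_integrableOn_Ioi {f : ℝ → E} {a b c : ℝ} (hf : IntegrableOn f (Ioi a))
    (hab : a ≤ b) (hbc : b ≤ c) : IntervalIntegrable f volume b c :=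
  (intervalIntegrable_iff_integrableOn_Ioc_of_le hbc).mpr
    (hf.mono_set (Ioc_subset_Ioi_self.trans (Ioi_subset_Ioi hab)))

lemma sum_intervalIntegral_natCast_mul [NormedSpace ℝ E] {f : ℝ → E}
    (hf : IntegrableOn f (Ioi 0)) {u : ℝ} (hu : 0 ≤ u) (N : ℕ) :
    ∑ n ∈ Finset.range N, ∫ x in n * u..(n + 1) * u, f x = ∫ x in 0..N * u, f x := by
  have h := intervalIntegral.sum_integral_adjacent_intervals (f := f) (μ := volume)
    (a := fun n : ℕ => n * u) (n := N) fun n _ =>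
      intervalIntegrable_of_integrableOn_Ioi hf (by positivity) (by push_cast; linarith)
  simpa using h

variable [NormedSpace ℝ E] [CompleteSpace E] {f f' : ℝ → E}

lemma norm_smul_sub_intervalIntegral_le {a b : ℝ} (hab : a ≤ b)
    (hderiv : ∀ x ∈ Icc a b, HasDerivAt f (f' x) x) (hf' : IntervalIntegrable f' volume a b) :
    ‖(b - a) • f b - ∫ x in a..b, f x‖ ≤ (b - a) * ∫ x in a..b, ‖f' x‖ := by
  have hint : IntervalIntegrable f volume a b :=
    ContinuousOn.intervalIntegrable fun x hx =>
      (hderiv x (uIcc_of_le hab ▸ hx)).continuousAt.continuousWithinAt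
  have hdist : ∀ x ∈ Icc a b, ‖f b - f x‖ ≤ ∫ y in a..b, ‖f' y‖ := fun x hx => by
    have hsub : uIcc x b ⊆ uIcc a b := by
      rw [uIcc_of_le hx.2, uIcc_of_le hab]
      exact Icc_subset_Icc_left hx.1
    rw [← intervalIntegral.integral_eq_sub_of_hasDerivAt
      (fun y hy => hderiv y (uIcc_of_le hab ▸ hsub hy)) (hf'.mono_set hsub)]
    exact (intervalIntegral.norm_integral_le_integral_norm hx.2).trans
      (intervalIntegral.integral_mono_interval hx.1 hx.2 le_rfl
        (Eventually.of_forall fun _ => norm_nonneg _) hf'.norm)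
  calc ‖(b - a) • f b - ∫ x in a..b, f x‖ = ‖∫ x in a..b, (f b - f x)‖ := by
        rw [intervalIntegral.integral_sub intervalIntegrable_const hint,
          intervalIntegral.integral_const]
    _ ≤ (∫ x in a..b, ‖f' x‖) * |b - a| :=
        intervalIntegral.norm_integral_le_of_norm_le_const fun x hx =>
          hdist x (Ioc_subset_Icc_self (uIoc_of_le hab ▸ hx))
    _ = (b - a) * ∫ x in a..b, ‖f' x‖ := by rw [abs_of_nonneg (sub_nonneg.mpr hab), mul_comm]

lemma norm_smul_sum_sub_intervalIntegral_le (hderiv : ∀ x ∈ Ici 0, HasDerivAt f (f' x) x)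
    (hf : IntegrableOn f (Ioi 0)) (hf' : IntegrableOn f' (Ioi 0)) {u : ℝ} (hu : 0 ≤ u) (N : ℕ) :
    ‖u • ∑ n ∈ Finset.range N, f ((n + 1) * u) - ∫ x in 0..N * u, f x‖ ≤
      u * ∫ x in Ioi 0, ‖f' x‖ := by
  have hterm (n : ℕ) : ‖u • f ((n + 1) * u) - ∫ x in n * u..(n + 1) * u, f x‖ ≤
      u * ∫ x in n * u..(n + 1) * u, ‖f' x‖ := by
    have hn : 0 ≤ n * u := by positivity
    have hle : n * u ≤ (n + 1) * u := by linarith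
    have hlen : (n + 1) * u - n * u = u := by ring
    simpa only [hlen] using norm_smul_sub_intervalIntegral_le hle
      (fun x hx => hderiv x (hn.trans hx.1)) (intervalIntegrable_of_integrableOn_Ioi hf' hn hle)
  calc _ ≤ ∑ n ∈ Finset.range N, u * ∫ x in n * u..(n + 1) * u, ‖f' x‖ := by
        rw [← sum_intervalIntegral_natCast_mul hf hu, Finset.smul_sum, ← Finset.sum_sub_distrib]
        exact norm_sum_le_of_le _ fun n _ => hterm n
    _ = u * ∫ x in 0..N * u, ‖f' x‖ := by
        rw [← Finset.mul_sum, sum_intervalIntegral_natCast_mul hf'.norm hu]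
    _ ≤ u * ∫ x in Ioi 0, ‖f' x‖ := by
        gcongr
        rw [intervalIntegral.integral_of_le (by positivity)]
        exact setIntegral_mono_set hf'.norm (Eventually.of_forall fun _ => norm_nonneg _)
          Ioc_subset_Ioi_self.eventuallyLE

lemma norm_smul_dilationSum_sub_integral_le (hderiv : ∀ x ∈ Ici 0, HasDerivAt f (f' x) x)
    (hf : IntegrableOn f (Ioi 0)) (hf' : IntegrableOn f' (Ioi 0)) {u : ℝ} (hu : 0 < u)
    (hsum : Summable fun n : ℕ => f ((n + 1) * u)) :
    ‖u • dilationSum f u - ∫ x in Ioi 0, f x‖ ≤ u * ∫ x in Ioi 0, ‖f' x‖ :=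
  le_of_tendsto' ((hsum.hasSum.tendsto_sum_nat.const_smul u).sub
    (intervalIntegral_tendsto_integral_Ioi 0 hf
      (tendsto_natCast_atTop_atTop.atTop_mul_const hu))).norm
    (norm_smul_sum_sub_intervalIntegral_le hderiv hf hf' hu.le)

lemma dilationSum_isBigO_zero (hderiv : ∀ x ∈ Ici 0, HasDerivAt f (f' x) x)
    (hf : IntegrableOn f (Ioi 0)) (hf' : IntegrableOn f' (Ioi 0))
    (hsum : ∀ u > 0, Summable fun n : ℕ => f ((n + 1) * u)) (hzero : ∫ x in Ioi 0, f x = 0) :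
    dilationSum f =O[𝓝[>] 0] (fun _ => (1 : ℝ)) := by
  refine .of_bound (∫ x in Ioi 0, ‖f' x‖) ?_
  filter_upwards [self_mem_nhdsWithin] with u (hu : 0 < u)
  have h := norm_smul_dilationSum_sub_integral_le hderiv hf hf' hu (hsum u hu)
  rw [hzero, sub_zero, norm_smul, Real.norm_of_nonneg hu.le] at h
  simpa using le_of_mul_le_mul_left h hu

end RiemannSum

section Mellin

lemma integral_norm_cpow_smul_comp_mul_left [NormedSpace ℂ E] (f : ℝ → E) (s : ℂ) {c : ℝ}
    (hc : 0 < c) : ∫ u : ℝ in Ioi 0, ‖(u : ℂ) ^ (s - 1) • f (c * u)‖ =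
      c ^ (-s.re) * ∫ u : ℝ in Ioi 0, ‖(u : ℂ) ^ (s - 1) • f u‖ := by
  have hscale : ∀ u ∈ Ioi (0 : ℝ), ‖(u : ℂ) ^ (s - 1) • f (c * u)‖ =
      c ^ (1 - s.re) * ‖((c * u : ℝ) : ℂ) ^ (s - 1) • f (c * u)‖ := fun u (hu : 0 < u) => by
    have hre : (s - 1).re = -(1 - s.re) := by simp
    rw [norm_smul, norm_smul, Complex.norm_cpow_eq_rpow_re_of_pos hu,
      Complex.norm_cpow_eq_rpow_re_of_pos (mul_pos hc hu), Real.mul_rpow hc.le hu.le, hre,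
      Real.rpow_neg hc.le]
    field_simp
  rw [setIntegral_congr_fun measurableSet_Ioi hscale, integral_const_mul,
    integral_comp_mul_left_Ioi (fun u : ℝ => ‖(u : ℂ) ^ (s - 1) • f u‖) 0 hc, mul_zero,
    smul_eq_mul, ← mul_assoc, ← div_eq_mul_inv, ← Real.rpow_sub_one hc.ne']
  ring_nf

lemma summable_one_div_nat_add_one_cpow {s : ℂ} (hs : 1 < s.re) :
    Summable fun n : ℕ => 1 / (n + 1 : ℂ) ^ s :=
  mod_cast (summable_nat_add_iff 1).mpr (Complex.summable_one_div_nat_cpow.mpr hs)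

lemma mellin_dilationSum [NormedSpace ℂ E] {f : ℝ → E} {s : ℂ} (hs : 1 < s.re)
    (hf : MellinConvergent f s) : mellin (dilationSum f) s = riemannZeta s • mellin f s := by
  let F (n : ℕ) (u : ℝ) : E := (u : ℂ) ^ (s - 1) • f ((n + 1) * u)
  have hpos (n : ℕ) : (0 : ℝ) < n + 1 := by positivity
  have hF (n : ℕ) : IntegrableOn (F n) (Ioi 0) :=
    (MellinConvergent.comp_mul_left (hpos n)).mpr hf
  have hmellin (n : ℕ) : ∫ u in Ioi 0, F n u = (1 / (n + 1 : ℂ) ^ s) • mellin f s := by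
    change mellin (fun u => f ((n + 1) * u)) s = _
    simpa [Complex.cpow_neg] using mellin_comp_mul_left f s (hpos n)
  have hsummable : Summable fun n => ∫ u in Ioi 0, ‖F n u‖ := by
    simp only [F, integral_norm_cpow_smul_comp_mul_left f s (hpos _)]
    exact (summable_nat_add_one_rpow_neg hs).mul_right _
  calc mellin (dilationSum f) s = ∫ u in Ioi 0, ∑' n, F n u := by
        simp only [mellin, dilationSum, F, tsum_const_smul'']
    _ = ∑' n : ℕ, (1 / (n + 1 : ℂ) ^ s) • mellin f s := by
        rw [← (hasSum_integral_of_summable_integral_norm hF hsummable).tsum_eq]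
        simp only [hmellin]
    _ = riemannZeta s • mellin f s := by
        rw [zeta_eq_tsum_one_div_nat_add_one_cpow hs]
        exact ((summable_one_div_nat_add_one_cpow hs).hasSum.smul_const _).tsum_eq

lemma mellin_deriv {f f' : ℝ → ℂ} {s : ℂ} (hderiv : ∀ x ∈ Ioi 0, HasDerivAt f (f' x) x)
    (hf : MellinConvergent f (s - 1)) (hf' : MellinConvergent f' s)
    (hzero : Tendsto (fun x : ℝ => (x : ℂ) ^ (s - 1) * f x) (𝓝[>] 0) (𝓝 0))
    (htop : Tendsto (fun x : ℝ => (x : ℂ) ^ (s - 1) * f x) atTop (𝓝 0)) :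
    mellin f' s = (1 - s) * mellin f (s - 1) := by
  have hpow : ∀ x ∈ Ioi (0 : ℝ), HasDerivAt (fun y : ℝ => (y : ℂ) ^ (s - 1))
      ((s - 1) * (x : ℂ) ^ (s - 1 - 1)) x := fun x (hx : 0 < x) => by
    simpa using ((hasDerivAt_id _).cpow_const (Or.inl (by simpa using hx))).comp_ofReal
  have hpow_int : IntegrableOn (fun x : ℝ => (s - 1) * (x : ℂ) ^ (s - 1 - 1) * f x) (Ioi 0) := by
    simp only [mul_assoc]
    exact hf.const_mul (s - 1)
  have hparts := integral_Ioi_mul_deriv_eq_deriv_mul hpow hderiv hf' hpow_int hzero htop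
  simp only [mul_assoc, integral_const_mul] at hparts
  simp only [mellin, smul_eq_mul, hparts]
  ring

end Mellin

section Schwartz

lemma exists_norm_schwartzMap_le_rpow [NormedSpace ℝ E] (f : 𝓢(ℝ, E)) (k : ℕ) :
    ∃ C, ∀ x > 0, ‖f x‖ ≤ C * x ^ (-k : ℝ) := by
  refine ⟨SchwartzMap.seminorm ℝ k 0 f, fun x hx => ?_⟩
  rw [Real.rpow_neg hx.le, Real.rpow_natCast, ← div_eq_mul_inv, le_div_iff₀ (by positivity)]
  simpa [mul_comm, abs_of_pos hx] using f.norm_pow_mul_le_seminorm ℝ k x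

lemma schwartzMap_isBigO_atTop [NormedSpace ℝ E] (f : 𝓢(ℝ, E)) (a : ℝ) :
    f =O[atTop] (· ^ a : ℝ → ℝ) := by
  refine ((f.isBigO_cocompact_rpow a).mono atTop_le_cocompact).congr' .rfl ?_
  filter_upwards [eventually_ge_atTop 0] with x hx
  rw [Real.norm_of_nonneg hx]

lemma schwartzMap_isBigO_zero [NormedSpace ℝ E] (f : 𝓢(ℝ, E)) :
    f =O[𝓝[>] 0] (fun _ => (1 : ℝ)) :=
  (f.continuous.continuousAt.isBigO_one ℝ).mono nhdsWithin_le_nhds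

variable [NormedSpace ℂ E] (f : 𝓢(ℝ, E)) {s : ℂ}

lemma mellinConvergent_schwartzMap (hs : 0 < s.re) : MellinConvergent f s :=
  mellinConvergent_of_isBigO_rpow (f.continuous.locallyIntegrable.locallyIntegrableOn _)
    (schwartzMap_isBigO_atTop f _) (lt_add_one s.re)
    (by simpa using schwartzMap_isBigO_zero f) hs

lemma tendsto_cpow_smul_schwartzMap_zero (hs : 0 < s.re) :
    Tendsto (fun x : ℝ => (x : ℂ) ^ s • f x) (𝓝[>] 0) (𝓝 0) := by
  have hcont : Continuous fun x : ℝ => (x : ℂ) ^ s • f x :=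
    (Complex.continuous_ofReal_cpow_const hs).smul f.continuous
  have hs0 : s ≠ 0 := fun h => by simp [h] at hs
  simpa [Complex.zero_cpow hs0] using hcont.continuousWithinAt (s := Ioi 0) (x := 0) |>.tendsto

lemma tendsto_cpow_smul_schwartzMap_atTop (s : ℂ) :
    Tendsto (fun x : ℝ => (x : ℂ) ^ s • f x) atTop (𝓝 0) := by
  have hcpow : (fun x : ℝ => (x : ℂ) ^ s) =O[atTop] (· ^ s.re) := by
    refine .of_bound 1 ?_
    filter_upwards [eventually_gt_atTop 0] with x hx
    rw [Complex.norm_cpow_eq_rpow_re_of_pos hx, one_mul]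
    exact le_abs_self _
  refine ((hcpow.smul (schwartzMap_isBigO_atTop f (-s.re - 1))).congr' .rfl ?_).trans_tendsto
    tendsto_inv_atTop_zero
  filter_upwards [eventually_gt_atTop 0] with x hx
  rw [smul_eq_mul, ← Real.rpow_add hx, ← Real.rpow_neg_one]
  ring_nf

lemma differentiableAt_mellin_schwartzMap (hs : 0 < s.re) : DifferentiableAt ℂ (mellin f) s :=
  mellin_differentiableAt_of_isBigO_rpow (f.continuous.locallyIntegrable.locallyIntegrableOn _)
    (schwartzMap_isBigO_atTop f _) (lt_add_one s.re)
    (by simpa using schwartzMap_isBigO_zero f) hs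

lemma differentiableAt_mellin_dilationSum [CompleteSpace E] (hs : 0 < s.re)
    (hzero : ∫ x in Ioi 0, f x = 0) : DifferentiableAt ℂ (mellin (dilationSum f)) s := by
  obtain ⟨k, hk⟩ := exists_nat_gt (max 1 s.re)
  have hk1 : (1 : ℝ) < k := (le_max_left _ _).trans_lt hk
  obtain ⟨C, hC⟩ := exists_norm_schwartzMap_le_rpow f k
  have hbounded : dilationSum f =O[𝓝[>] 0] (fun _ => (1 : ℝ)) :=
    dilationSum_isBigO_zero (fun x _ => f.hasDerivAt x) f.integrable.integrableOn
      (SchwartzMap.derivCLM ℝ E f).integrable.integrableOn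
      (fun _ => summable_apply_mul_of_norm_le_rpow hk1 hC) hzero
  exact mellin_differentiableAt_of_isBigO_rpow
    ((continuousOn_dilationSum f.continuous.continuousOn hk1 hC).locallyIntegrableOn
      measurableSet_Ioi)
    (dilationSum_isBigO_atTop hk1 hC) ((le_max_right _ _).trans_lt hk)
    (by simpa using hbounded) hs

end Schwartz

section DerivIdSmul

/-- The derivative `(x g(x))'`. It is a test function of integral zero, and its Mellin transform
at `s` is `(1 - s)` times that of `g`, which cancels the pole of `ζ`. -/
noncomputable def derivIdSmul (g : 𝓢(ℝ, ℂ)) : 𝓢(ℝ, ℂ) :=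
  SchwartzMap.derivCLM ℝ ℂ (SchwartzMap.smulLeftCLM ℂ (id : ℝ → ℝ) g)

variable (g : 𝓢(ℝ, ℂ))

lemma smulLeftCLM_id_apply (x : ℝ) : SchwartzMap.smulLeftCLM ℂ (id : ℝ → ℝ) g x = x * g x := by
  rw [SchwartzMap.smulLeftCLM_apply_apply (by fun_prop), id, Complex.real_smul]

lemma hasDerivAt_smulLeftCLM_id (x : ℝ) :
    HasDerivAt (SchwartzMap.smulLeftCLM ℂ (id : ℝ → ℝ) g) (derivIdSmul g x) x :=
  SchwartzMap.hasDerivAt _ x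

lemma derivIdSmul_neg {g : 𝓢(ℝ, ℂ)} (hg : ∀ x, g (-x) = g x) (x : ℝ) :
    derivIdSmul g (-x) = derivIdSmul g x := by
  set h := SchwartzMap.smulLeftCLM ℂ (id : ℝ → ℝ) g with hdef
  have hodd : (fun y => h (-y)) = -h := by
    ext y
    simp [hdef, smulLeftCLM_id_apply, hg]
  have hderiv := deriv_comp_neg h x
  rw [hodd, deriv.neg] at hderiv
  exact (neg_injective hderiv).symm

lemma integral_derivIdSmul : ∫ x, derivIdSmul g x = 0 :=
  integral_eq_zero_of_hasDerivAt_of_integrable (hasDerivAt_smulLeftCLM_id g)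
    (derivIdSmul g).integrable (SchwartzMap.integrable _)

lemma integral_Ioi_derivIdSmul : ∫ x in Ioi 0, derivIdSmul g x = 0 := by
  rw [integral_Ioi_of_hasDerivAt_of_tendsto' (fun x _ => hasDerivAt_smulLeftCLM_id g x)
    (derivIdSmul g).integrable.integrableOn
    ((SchwartzMap.tendsto_cocompact _).mono_left atTop_le_cocompact)]
  simp [smulLeftCLM_id_apply]

lemma mellin_derivIdSmul {s : ℂ} (hs : 0 < s.re) :
    mellin (derivIdSmul g) s = (1 - s) * mellin g s := by
  set h := SchwartzMap.smulLeftCLM ℂ (id : ℝ → ℝ) g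
  have h_eq : (h : ℝ → ℂ) = fun x : ℝ => (x : ℂ) ^ (1 : ℂ) • g x := by
    ext x
    simp [h, smulLeftCLM_id_apply]
  have hconv : MellinConvergent h (s - 1) := by
    rw [h_eq, MellinConvergent.cpow_smul, sub_add_cancel]
    exact mellinConvergent_schwartzMap g hs
  have hboundary : EqOn (fun x : ℝ => (x : ℂ) ^ s • g x)
      (fun x : ℝ => (x : ℂ) ^ (s - 1) * h x) (Ioi 0) := fun x (hx : 0 < x) => by
    have hx0 : (x : ℂ) ≠ 0 := Complex.ofReal_ne_zero.mpr hx.ne'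
    simp only [h_eq, smul_eq_mul, ← mul_assoc, ← Complex.cpow_add _ _ hx0, sub_add_cancel]
  rw [mellin_deriv (fun x _ => hasDerivAt_smulLeftCLM_id g x) hconv
    (mellinConvergent_schwartzMap _ hs)
    ((tendsto_cpow_smul_schwartzMap_zero g hs).congr' (hboundary.eventuallyEq_of_mem
      self_mem_nhdsWithin))
    ((tendsto_cpow_smul_schwartzMap_atTop g s).congr' (hboundary.eventuallyEq_of_mem
      (Ioi_mem_atTop 0))), h_eq, mellin_cpow_smul, sub_add_cancel]

lemma mellin_dilationSum_derivIdSmul_of_one_lt_re {s : ℂ} (hs : 1 < s.re) :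
    mellin (dilationSum (derivIdSmul g)) s = -(riemannZeta₁ s * mellin g s) := by
  have hs0 : 0 < s.re := one_pos.trans hs
  have hs1 : s ≠ 1 := fun h => by simp [h] at hs
  have hsub : s - 1 ≠ 0 := sub_ne_zero.mpr hs1
  rw [mellin_dilationSum hs (mellinConvergent_schwartzMap _ hs0), mellin_derivIdSmul g hs0,
    riemannZeta_eq_inv_sub_mul hs1, smul_eq_mul]
  field_simp
  ring

lemma mellin_dilationSum_derivIdSmul {s : ℂ} (hs : 0 < s.re) :
    mellin (dilationSum (derivIdSmul g)) s = -(riemannZeta₁ s * mellin g s) := by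
  have hopen : IsOpen {w : ℂ | 0 < w.re} := isOpen_lt continuous_const Complex.continuous_re
  have hleft : DifferentiableOn ℂ (mellin (dilationSum (derivIdSmul g))) {w | 0 < w.re} :=
    fun w hw => (differentiableAt_mellin_dilationSum _ hw
      (integral_Ioi_derivIdSmul g)).differentiableWithinAt
  have hright : DifferentiableOn ℂ (fun w => -(riemannZeta₁ w * mellin g w)) {w | 0 < w.re} :=
    fun w hw => ((differentiable_riemannZeta₁ w).mul
      (differentiableAt_mellin_schwartzMap g hw)).neg.differentiableWithinAt
  have hnear : ∀ᶠ w in 𝓝 (2 : ℂ), 1 < w.re :=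
    (isOpen_lt continuous_const Complex.continuous_re).mem_nhds (by simp)
  exact (hleft.analyticOnNhd hopen).eqOn_of_preconnected_of_eventuallyEq
    (hright.analyticOnNhd hopen) (convex_halfSpace_re_gt 0).isPreconnected (z₀ := 2) (by simp)
    (hnear.mono fun w hw => mellin_dilationSum_derivIdSmul_of_one_lt_re g hw) hs

end DerivIdSmul

lemma exists_contDiff_mellin_ne_zero (s : ℂ) :
    ∃ φ : ℝ → ℂ, ContDiff ℝ ∞ φ ∧ HasCompactSupport φ ∧ tsupport φ ⊆ Ioi 0 ∧ mellin φ s ≠ 0 := by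
  by_contra! hzero
  have hpow : ContinuousOn (fun u : ℝ => (u : ℂ) ^ (s - 1)) (Ioi 0) := fun u hu =>
    (Complex.continuousAt_ofReal_cpow_const u _ (Or.inr (ne_of_gt hu))).continuousWithinAt
  have hae := isOpen_Ioi.ae_eq_zero_of_integral_contDiff_smul_eq_zero (μ := volume)
    (hpow.locallyIntegrableOn measurableSet_Ioi) fun φ hsmooth hcompact hsupp => by
      have hφ := hzero (fun u => (φ u : ℂ)) (Complex.ofRealCLM.contDiff.comp hsmooth)
        (hcompact.comp_left Complex.ofReal_zero)
        ((tsupport_comp_subset Complex.ofReal_zero φ).trans hsupp)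
      have hzero_outside (u : ℝ) (hu : u ∉ Ioi 0) : φ u • (u : ℂ) ^ (s - 1) = 0 := by
        rw [image_eq_zero_of_notMem_tsupport (mt (@hsupp u) hu), zero_smul]
      rw [← setIntegral_eq_integral_of_forall_compl_eq_zero hzero_outside, ← hφ]
      simp only [mellin, Complex.real_smul, smul_eq_mul, mul_comm]
  have hnull : volume (Ioi (0 : ℝ)) = 0 := by
    rw [measure_eq_zero_iff_ae_notMem]
    filter_upwards [hae] with u hu hpos
    have hu0 : (u : ℂ) = 0 := ((Complex.cpow_eq_zero_iff _ _).mp (hu hpos)).1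
    exact (ne_of_gt hpos) (Complex.ofReal_eq_zero.mp hu0)
  simp at hnull

lemma exists_even_schwartzMap_mellin_ne_zero (s : ℂ) :
    ∃ g : 𝓢(ℝ, ℂ), (∀ x, g (-x) = g x) ∧ mellin g s ≠ 0 := by
  obtain ⟨φ, hsmooth, hcompact, hsupp, hne⟩ := exists_contDiff_mellin_ne_zero s
  let ψ : 𝓢(ℝ, ℂ) := hcompact.toSchwartzMap hsmooth
  let g : 𝓢(ℝ, ℂ) := ψ + SchwartzMap.compCLMOfContinuousLinearEquiv ℝ (.neg ℝ) ψ
  have hg (x : ℝ) : g x = φ x + φ (-x) := rfl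
  refine ⟨g, fun x => by rw [hg, hg, neg_neg, add_comm], ?_⟩
  have hmellin : mellin g s = mellin φ s :=
    setIntegral_congr_fun measurableSet_Ioi fun u (hu : 0 < u) => by
      have hneg : φ (-u) = 0 := image_eq_zero_of_notMem_tsupport fun h =>
        (neg_neg_of_pos hu).not_gt (hsupp h)
      simp only [hg, hneg, add_zero]
  rwa [hmellin]

lemma integral_Emap_mul_cpow_div (f : ℝ → ℂ) (w : ℂ) :
    ∫ u in Ioi (0 : ℝ), Emap f u * (u : ℂ) ^ w / u = mellin (dilationSum f) (1 / 2 + w) := by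
  refine setIntegral_congr_fun measurableSet_Ioi fun u (hu : 0 < u) => ?_
  have hu0 : (u : ℂ) ≠ 0 := Complex.ofReal_ne_zero.mpr hu.ne'
  simp only [Emap, dilationSum, smul_eq_mul, Complex.cpow_sub _ _ hu0, Complex.cpow_add _ _ hu0,
    Complex.cpow_one]
  ring

lemma riemannZeta_eq_zero_of_riemannZeta₁_eq_zero {s : ℂ} (h : riemannZeta₁ s = 0) :
    riemannZeta s = 0 := by
  have hs : s ≠ 1 := by
    rintro rfl
    simp [riemannZeta₁_one] at h
  rw [riemannZeta_eq_inv_sub_mul hs, h, mul_zero]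

theorem stmt5_general (z₀ : ℂ) (him : -(1 / 2) < z₀.im)
    (hvanish : ∀ f : SchwartzMap ℝ ℂ, (∀ x : ℝ, f (-x) = f x) → (∫ x : ℝ, f x = 0) →
      ∫ u in Ioi (0:ℝ), Emap (⇑f) u * (u : ℂ) ^ (-(Complex.I * z₀)) / (u : ℂ) = 0) :
    riemannZeta (1/2 - Complex.I * z₀) = 0 := by
  set s := 1 / 2 - Complex.I * z₀ with hs_def
  have hre : s.re = 1 / 2 + z₀.im := by simp [hs_def]
  have hs : 0 < s.re := by linarith
  obtain ⟨g, heven, hne⟩ := exists_even_schwartzMap_mellin_ne_zero s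
  have hmellin : mellin (dilationSum (derivIdSmul g)) s = 0 := by
    rw [hs_def, sub_eq_add_neg, ← integral_Emap_mul_cpow_div]
    exact hvanish _ (derivIdSmul_neg heven) (integral_derivIdSmul g)
  rw [mellin_dilationSum_derivIdSmul g hs, neg_eq_zero] at hmellin
  exact riemannZeta_eq_zero_of_riemannZeta₁_eq_zero
    ((mul_eq_zero.mp hmellin).resolve_right hne)

theorem stmt5 (z₀ : ℂ) (him : |z₀.im| < 1/2)
    (hvanish : ∀ f : SchwartzMap ℝ ℂ, (∀ x : ℝ, f (-x) = f x) → (∫ x : ℝ, f x = 0) →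
      ∫ u in Ioi (0:ℝ), Emap (⇑f) u * (u : ℂ) ^ (-(Complex.I * z₀)) / (u : ℂ) = 0) :
    riemannZeta (1/2 - Complex.I * z₀) = 0 :=
  stmt5_general z₀ (neg_lt_of_abs_lt him) hvanish
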